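/- Let E be a real inner product space and F : E → E Lipschitz with constant L > 0, satisfying the one-sided Lipschitz condition ⟨F(x) − F(y), x − y⟩ ≤ ν ‖x − y‖² for all x, y, with −L ≤ ν < 0. Let 0 < Δt < 2|ν|/L², and let (u^k), (w^k) be forward Euler sequences: u^{k+1} = u^k + Δt F(u^k) and w^{k+1} = w^k + Δt F(w^k). Then the factor c := 1 + L²Δt² + 2Δtν satisfies 0 ≤ c < 1, for every k one has ‖u^k − w^k‖² ≤ c^k ‖u^0 − w^0‖², and therefore ‖u^k − w^k‖ → 0 as k → ∞ (the timestep bound Δt < 2|ν|/L² guarantees that the dissipativity of the ODE is inherited by the forward Euler discretization). -/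

import Mathlib

open scoped RealInnerProductSpace

/-! Put `a = x - y` and `b = F x - F y`. In the expansion
`‖a + t • b‖² = ‖a‖² + 2t⟪b, a⟫ + t²‖b‖²` the one-sided Lipschitz condition bounds the cross term
and the Lipschitz condition the last one, so an Euler step multiplies squared distances by at most
`c = 1 + L²t² + 2tν`. Here `c = (1 - Lt)² + 2t(ν + L) ≥ 0`, and the timestep bound says exactly
that the gain `L²t²` is smaller than the loss `2t|ν|`. -/

/-- One step of the forward Euler method for `u̇ = F u` with step size `t`. -/
def forwardEulerStep {R E : Type*} [Ring R] [AddCommGroup E] [Module R E]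
    (F : E → E) (t : R) (x : E) : E :=
  x + t • F x

theorem forwardEulerStep_sub {R E : Type*} [Ring R] [AddCommGroup E] [Module R E]
    (F : E → E) (t : R) (x y : E) :
    forwardEulerStep F t x - forwardEulerStep F t y = (x - y) + t • (F x - F y) := by
  simp only [forwardEulerStep, smul_sub, add_sub_add_comm]

/-- The amplification factor `c` of squared distances under one forward Euler step of size `t`,
for a vector field with Lipschitz constant `L` and one-sided Lipschitz constant `ν`. -/
def forwardEulerFactor {R : Type*} [CommRing R] (L ν t : R) : R :=
  1 + L ^ 2 * t ^ 2 + 2 * t * ν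

theorem forwardEulerFactor_nonneg {R : Type*} [CommRing R] [LinearOrder R] [IsStrictOrderedRing R]
    {L ν t : R} (hν : -L ≤ ν) (ht : 0 ≤ t) : 0 ≤ forwardEulerFactor L ν t :=
  calc
    0 ≤ (1 - L * t) ^ 2 + 2 * t * (ν - -L) := by
      have := sub_nonneg.2 hν
      positivity
    _ = forwardEulerFactor L ν t := by rw [forwardEulerFactor]; ring

theorem forwardEulerFactor_lt_one_iff {K : Type*} [Field K] [LinearOrder K] [IsStrictOrderedRing K]
    {L ν t : K} (hL : L ≠ 0) (ht : 0 < t) :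
    forwardEulerFactor L ν t < 1 ↔ t < 2 * -ν / L ^ 2 :=
  calc
    forwardEulerFactor L ν t < 1 ↔ t * (t * L ^ 2) < t * (2 * -ν) := by
      rw [forwardEulerFactor]; constructor <;> intro h <;> linarith
    _ ↔ t * L ^ 2 < 2 * -ν := mul_lt_mul_iff_right₀ ht
    _ ↔ t < 2 * -ν / L ^ 2 := (lt_div_iff₀ (by positivity)).symm

section Contraction

variable {E : Type*} [SeminormedAddCommGroup E] [InnerProductSpace ℝ E]
  {F : E → E} {L ν t : ℝ}

theorem norm_add_smul_sq_le {a b : E} (hb : ‖b‖ ≤ L * ‖a‖) (hba : ⟪b, a⟫ ≤ ν * ‖a‖ ^ 2)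
    (ht : 0 ≤ t) : ‖a + t • b‖ ^ 2 ≤ forwardEulerFactor L ν t * ‖a‖ ^ 2 :=
  calc
    ‖a + t • b‖ ^ 2 = ‖a‖ ^ 2 + 2 * (t * ⟪b, a⟫) + (t * ‖b‖) ^ 2 := by
      rw [norm_add_sq_real, real_inner_smul_right, real_inner_comm, norm_smul,
        Real.norm_of_nonneg ht]
    _ ≤ ‖a‖ ^ 2 + 2 * (t * (ν * ‖a‖ ^ 2)) + (t * (L * ‖a‖)) ^ 2 := by gcongr
    _ = forwardEulerFactor L ν t * ‖a‖ ^ 2 := by rw [forwardEulerFactor]; ring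

theorem norm_forwardEulerStep_sub_sq_le {x y : E} (hLip : ‖F x - F y‖ ≤ L * ‖x - y‖)
    (hOneSided : ⟪F x - F y, x - y⟫ ≤ ν * ‖x - y‖ ^ 2) (ht : 0 ≤ t) :
    ‖forwardEulerStep F t x - forwardEulerStep F t y‖ ^ 2 ≤
      forwardEulerFactor L ν t * ‖x - y‖ ^ 2 := by
  rw [forwardEulerStep_sub]
  exact norm_add_smul_sq_le hLip hOneSided ht

end Contraction

theorem tendsto_zero_of_sq_le_geometric {a : ℕ → ℝ} {c C : ℝ} (hc : |c| < 1)
    (ha : ∀ k, a k ^ 2 ≤ c ^ k * C) : Filter.Tendsto a Filter.atTop (nhds 0) := by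
  have hgeom : Filter.Tendsto (fun k : ℕ ↦ c ^ k * C) Filter.atTop (nhds 0) := by
    simpa only [zero_mul] using (tendsto_pow_atTop_nhds_zero_of_abs_lt_one hc).mul_const C
  have hsq : Filter.Tendsto (fun k ↦ a k ^ 2) Filter.atTop (nhds 0) :=
    squeeze_zero (fun k ↦ sq_nonneg (a k)) ha hgeom
  have habs : Filter.Tendsto (fun k ↦ |a k|) Filter.atTop (nhds 0) := by
    simpa only [Real.sqrt_sq_eq_abs, Real.sqrt_zero] using hsq.sqrt
  exact (tendsto_zero_iff_abs_tendsto_zero a).2 habs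

/-- The timestep bound `Δt < 2|ν|/L²` guarantees that the dissipativity of the ODE
is inherited by the forward Euler discretization: the amplification factor
`c = 1 + L²Δt² + 2Δtν` satisfies `0 ≤ c < 1`, the squared distance between two
forward Euler sequences satisfies `‖u^k − w^k‖² ≤ c^k ‖u^0 − w^0‖²`, and the
distance tends to `0`. -/
theorem forward_euler_dissipativity
    (E : Type*) [NormedAddCommGroup E] [InnerProductSpace ℝ E]
    (F : E → E) (L ν Δt : ℝ)
    (hL : 0 < L) (hνL : -L ≤ ν) (hν : ν < 0)
    (hLip : ∀ x y, ‖F x - F y‖ ≤ L * ‖x - y‖)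
    (hOneSided : ∀ x y, ⟪F x - F y, x - y⟫ ≤ ν * ‖x - y‖ ^ 2)
    (hΔt0 : 0 < Δt) (hΔt : Δt < 2 * |ν| / L ^ 2)
    (u w : ℕ → E)
    (hu : ∀ k, u (k + 1) = u k + Δt • F (u k))
    (hw : ∀ k, w (k + 1) = w k + Δt • F (w k)) :
    0 ≤ 1 + L ^ 2 * Δt ^ 2 + 2 * Δt * ν ∧
    1 + L ^ 2 * Δt ^ 2 + 2 * Δt * ν < 1 ∧
    (∀ k : ℕ, ‖u k - w k‖ ^ 2 ≤
      (1 + L ^ 2 * Δt ^ 2 + 2 * Δt * ν) ^ k * ‖u 0 - w 0‖ ^ 2) ∧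
    Filter.Tendsto (fun k : ℕ => ‖u k - w k‖) Filter.atTop (nhds 0) := by
  have hc₀ : 0 ≤ forwardEulerFactor L ν Δt := forwardEulerFactor_nonneg hνL hΔt0.le
  have hc₁ : forwardEulerFactor L ν Δt < 1 :=
    (forwardEulerFactor_lt_one_iff hL.ne' hΔt0).2 (abs_of_neg hν ▸ hΔt)
  have hstep (k : ℕ) :
      ‖u (k + 1) - w (k + 1)‖ ^ 2 ≤ forwardEulerFactor L ν Δt * ‖u k - w k‖ ^ 2 := by
    rw [hu, hw]
    exact norm_forwardEulerStep_sub_sq_le (hLip _ _) (hOneSided _ _) hΔt0.le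
  have hdecay (k : ℕ) : ‖u k - w k‖ ^ 2 ≤ forwardEulerFactor L ν Δt ^ k * ‖u 0 - w 0‖ ^ 2 :=
    le_geom (u := fun k ↦ ‖u k - w k‖ ^ 2) hc₀ k fun j _ ↦ hstep j
  exact ⟨hc₀, hc₁, hdecay,
    tendsto_zero_of_sq_le_geometric ((abs_of_nonneg hc₀).trans_lt hc₁) hdecay⟩
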